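/- Let m, n ≥ 1 be integers and let U(n) denote the group of n×n unitary complex matrices, topologized as a subspace of M_n. There exists a continuous spectrum-shrinking map φ : U(n) → M_m if and only if n divides m; and when n divides m, every continuous spectrum-shrinking map φ : U(n) → M_m satisfies k_{φ(X)} = (k_X)^{m/n} for all X ∈ U(n) (in particular, sp(φ(X)) = sp(X) for all X). -/

import Mathlib

open Matrix

/-!
The unitaries `V * diag(e^{iθ₁}, …, e^{iθₙ}) * V⁻¹` with `θ₁ < … < θₙ < θ₁ + 2π` are those with
simple spectrum. They are parametrised by the connected space `U(n) × alcove`, on which the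
eigenvalues carry continuous labels, so the multiplicity `a j` of the `j`-th eigenvalue of `X` as a
root of `k_{φ(X)}` does not depend on `X`. Rotating the `n`-th roots of unity by `1/n` of a turn
gives the same set of eigenvalues with the labels shifted cyclically; the two diagonal matrices are
conjugate by a permutation matrix, hence `a (j + 1) = a j`. So `k_{φ(X)} = (k_X)^a` on a dense set
of `X`, therefore everywhere, and `m = n * a` by comparing degrees.
-/

section RootLabels

open Polynomial

variable {ι K T : Type*} [Fintype ι] [Field K]

theorem rootMultiplicity_prod_X_sub_C_pow {l : ι → K} (hl : Function.Injective l) (a : ι → ℕ)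
    (j : ι) : (∏ i, (X - C (l i)) ^ a i).rootMultiplicity (l j) = a j := by
  classical
  have hne : ∏ i, (X - C (l i)) ^ a i ≠ 0 :=
    (monic_prod_of_monic _ _ fun i _ => (monic_X_sub_C (l i)).pow (a i)).ne_zero
  simp [← count_roots, roots_prod _ _ hne, Multiset.count_bind, Multiset.count_singleton,
    hl.eq_iff, Finset.sum_map_val]

theorem eq_prod_X_sub_C_pow_rootMultiplicity {p : K[X]} (hp : p.Splits) (hm : p.Monic)
    {l : ι → K} (hl : Function.Injective l) (hroots : ∀ x, p.IsRoot x → x ∈ Set.range l) :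
    p = ∏ j, (X - C (l j)) ^ p.rootMultiplicity (l j) := by
  classical
  have hsub : p.roots.toFinset ⊆ Finset.univ.image l := fun x hx => by
    simpa using hroots x (isRoot_of_mem_roots (Multiset.mem_toFinset.1 hx))
  calc p = ∏ x ∈ p.roots.toFinset, (X - C x) ^ p.roots.count x := by
        rw [← Finset.prod_multiset_map_count]; exact hp.eq_prod_roots_of_monic hm
    _ = ∏ x ∈ Finset.univ.image l, (X - C x) ^ p.roots.count x :=
        Finset.prod_subset hsub fun x _ hx => by
          rw [Multiset.count_eq_zero_of_notMem (mt Multiset.mem_toFinset.2 hx), pow_zero]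
    _ = ∏ j, (X - C (l j)) ^ p.rootMultiplicity (l j) := by
        simp only [Finset.prod_image hl.injOn, count_roots]

variable [TopologicalSpace K] [IsTopologicalRing K] [T2Space K] [Infinite K] [TopologicalSpace T]

theorem isClosed_setOf_eq_prod_X_sub_C_pow {p : T → K[X]}
    (hp : ∀ x, Continuous fun t => (p t).eval x) {l : T → ι → K} (hl : Continuous l) (a : ι → ℕ) :
    IsClosed {t | p t = ∏ j, (X - C (l t j)) ^ a j} := by
  have heval : {t | p t = ∏ j, (X - C (l t j)) ^ a j} =
      ⋂ x, {t | (p t).eval x = ∏ j, (x - l t j) ^ a j} := by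
    ext t
    rw [Set.mem_iInter]
    refine ⟨fun h x => ?_, fun h => Polynomial.funext fun x => ?_⟩
    · simpa [eval_prod] using congrArg (eval x) h
    · simpa [eval_prod] using h x
  rw [heval]
  exact isClosed_iInter fun x => isClosed_eq (hp x) (by fun_prop)

theorem exists_eq_prod_X_sub_C_pow_of_preconnectedSpace [PreconnectedSpace T] {p : T → K[X]}
    (hp : ∀ x, Continuous fun t => (p t).eval x) (hsplits : ∀ t, (p t).Splits)
    (hmonic : ∀ t, (p t).Monic) {d : ℕ} (hdeg : ∀ t, (p t).natDegree ≤ d)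
    {l : T → ι → K} (hl : Continuous l) (hinj : ∀ t, Function.Injective (l t))
    (hroots : ∀ t x, (p t).IsRoot x → x ∈ Set.range (l t)) :
    ∃ a : ι → ℕ, ∀ t, p t = ∏ j, (X - C (l t j)) ^ a j := by
  let mult : T → ι → ℕ := fun t j => (p t).rootMultiplicity (l t j)
  have hfiber (a : ι → ℕ) : mult ⁻¹' {a} = {t | p t = ∏ j, (X - C (l t j)) ^ a j} := by
    ext t
    refine ⟨?_, fun h => ?_⟩
    · rintro rfl
      exact eq_prod_X_sub_C_pow_rootMultiplicity (hsplits t) (hmonic t) (hinj t) (hroots t)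
    · funext j
      exact (congrArg _ h).trans (rootMultiplicity_prod_X_sub_C_pow (hinj t) a j)
  have hfinite : (Set.range mult).Finite := by
    refine (Set.Finite.pi' fun _ => Set.finite_Iic d).subset ?_
    rintro _ ⟨t, rfl⟩ j
    classical
    exact (count_roots (p t) ▸ Multiset.count_le_card _ _).trans ((card_roots' _).trans (hdeg t))
  have hcont : Continuous mult := by
    refine continuous_iff_isClosed.2 fun s _ => ?_
    rw [← Set.preimage_inter_range, ← Set.biUnion_preimage_singleton]
    exact (hfinite.inter_of_right s).isClosed_biUnion fun a _ =>
      hfiber a ▸ isClosed_setOf_eq_prod_X_sub_C_pow hp hl a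
  rcases isEmpty_or_nonempty T with hT | ⟨⟨t₀⟩⟩
  · exact ⟨0, hT.elim⟩
  · refine ⟨mult t₀, fun t => ?_⟩
    have hmem : t ∈ mult ⁻¹' {mult t₀} := PreconnectedSpace.constant inferInstance hcont
    rwa [hfiber] at hmem

end RootLabels

section Charpoly

open Polynomial

variable {ι κ K : Type*} [Fintype ι] [DecidableEq ι] [Fintype κ] [DecidableEq κ] [Field K]

theorem continuous_eval_charpoly {R T : Type*} [CommRing R] [TopologicalSpace R]
    [IsTopologicalRing R] [TopologicalSpace T] {f : T → Matrix ι ι R} (hf : Continuous f) (x : R) :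
    Continuous fun t => (f t).charpoly.eval x := by
  simp only [Matrix.eval_charpoly]
  exact (continuous_const.sub hf).matrix_det

theorem spectrum_eq_of_charpoly_eq_pow {A : Matrix ι ι K} {B : Matrix κ κ K} {a : ℕ}
    (h : A.charpoly = B.charpoly ^ a) (ha : a ≠ 0) : spectrum K A = spectrum K B := by
  ext x
  simp only [Matrix.mem_spectrum_iff_isRoot_charpoly, h, IsRoot.def, eval_pow, pow_eq_zero_iff ha]

end Charpoly

theorem nonempty_matrix_algHom_of_dvd (R : Type*) [CommRing R] {n m : ℕ} (h : n ∣ m) :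
    Nonempty (Matrix (Fin n) (Fin n) R →ₐ[R] Matrix (Fin m) (Fin m) R) := by
  obtain ⟨a, rfl⟩ := exists_eq_mul_left_of_dvd h
  exact ⟨((compAlgEquiv (Fin a) (Fin n) R R).trans
    (reindexAlgEquiv R R finProdFinEquiv)).toAlgHom.comp (scalarAlgHom (Fin a) R)⟩

section Alcove

open Real Set

/-- The open fundamental alcove `θ₁ < … < θₙ < θ₁ + 2π`: angles of `n` distinct points of the circle
listed counterclockwise. It is convex, and `Circle.exp` labels the points continuously on it. -/
def angleAlcove (n : ℕ) : Set (Fin n → ℝ) :=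
  {θ | ∀ i j, i < j → θ j - θ i ∈ Ioo 0 (2 * π)}

variable {n : ℕ}

theorem convex_angleAlcove : Convex ℝ (angleAlcove n) := by
  simp only [angleAlcove, ofPred_forall]
  exact convex_iInter fun i => convex_iInter fun j => convex_iInter fun _ =>
    (convex_Ioo 0 (2 * π)).is_linear_preimage
      (LinearMap.proj (R := ℝ) (φ := fun _ : Fin n => ℝ) j - LinearMap.proj i).isLinear

theorem injective_circleExp_of_mem_angleAlcove {θ : Fin n → ℝ} (hθ : θ ∈ angleAlcove n) :
    Function.Injective fun j => Circle.exp (θ j) := by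
  refine Function.Injective.of_lt_imp_ne fun i j hij heq => ?_
  obtain ⟨k, hk⟩ := Circle.exp_eq_exp.1 heq.symm
  obtain ⟨hpos, hlt⟩ := hθ i j hij
  rw [hk, add_sub_cancel_left] at hpos hlt
  have hk_pos : (0 : ℝ) < k := pos_of_mul_pos_left hpos two_pi_pos.le
  have hk_lt : (k : ℝ) < 1 := by nlinarith [two_pi_pos]
  norm_cast at hk_pos hk_lt
  omega

/-- Angles of the vertices of the regular `n`-gon, rotated by `s` steps from the `n`-th roots of
unity. The vertices at `s = 1` are those at `s = 0` with labels shifted cyclically. -/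
noncomputable def regularAngles (n : ℕ) (s : ℝ) (j : Fin n) : ℝ := 2 * π * ((j + s) / n)

theorem regularAngles_mem_angleAlcove (s : ℝ) : regularAngles n s ∈ angleAlcove n := by
  intro i j hij
  have hn : (0 : ℝ) < n := by exact_mod_cast i.pos
  have hij' : (i : ℝ) < j := by exact_mod_cast hij
  have hj : (j : ℝ) < n := by exact_mod_cast j.2
  have hdiff : regularAngles n s j - regularAngles n s i = 2 * π * (((j : ℝ) - i) / n) := by
    simp only [regularAngles]; ring
  rw [hdiff]
  refine ⟨mul_pos two_pi_pos (div_pos (sub_pos.2 hij') hn), ?_⟩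
  exact mul_lt_of_lt_one_right two_pi_pos
    ((div_lt_one hn).2 ((sub_le_self _ (Nat.cast_nonneg _)).trans_lt hj))

theorem circleExp_regularAngles_one [NeZero n] (j : Fin n) :
    Circle.exp (regularAngles n 1 j) = Circle.exp (regularAngles n 0 (j + 1)) := by
  have hn : (n : ℝ) ≠ 0 := NeZero.ne _
  refine Circle.exp_eq_exp.2 ⟨((j + 1) / n : ℕ), ?_⟩
  have hdiv : (((j : ℕ) + 1 : ℕ) : ℝ) = n * ((j + 1) / n : ℕ) + ((j + 1 : Fin n) : ℕ) := by
    rw [Fin.val_add, Fin.val_one', Nat.add_mod_mod, ← Nat.cast_mul, ← Nat.cast_add,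
      Nat.div_add_mod]
  simp only [regularAngles, Int.cast_natCast]
  push_cast at hdiv ⊢
  rw [hdiv]
  field_simp
  ring

theorem mem_closure_angleAlcove {θ : Fin n → ℝ}
    (hθ : ∀ i j, i < j → θ j - θ i ∈ Icc 0 (2 * π)) : θ ∈ closure (angleAlcove n) := by
  have hsegment : openSegment ℝ θ (regularAngles n 0) ⊆ angleAlcove n := by
    rintro _ ⟨a, b, ha, hb, hab, rfl⟩ i j hij
    have hmem := (convex_Icc 0 (2 * π)).combo_closure_interior_mem_interior
      (subset_closure (hθ i j hij))
      (by rw [interior_Icc]; exact regularAngles_mem_angleAlcove 0 i j hij) ha.le hb hab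
    rw [interior_Icc] at hmem
    convert hmem using 1
    simp only [Pi.add_apply, Pi.smul_apply, smul_eq_mul]
    ring
  exact closure_mono hsegment (closure_openSegment (𝕜 := ℝ) θ _ ▸ left_mem_segment ℝ θ _)

theorem exists_perm_mem_closure_angleAlcove (z : Fin n → Circle) :
    ∃ σ : Equiv.Perm (Fin n), ∃ θ ∈ closure (angleAlcove n), z ∘ σ = fun j => Circle.exp (θ j) := by
  let σ := Tuple.sort fun j => Complex.arg (z j)
  refine ⟨σ, fun j => Complex.arg (z (σ j)), mem_closure_angleAlcove fun i j hij => ?_,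
    funext fun j => (Circle.exp_arg _).symm⟩
  have hmono : Complex.arg (z (σ i)) ≤ Complex.arg (z (σ j)) :=
    Tuple.monotone_sort (fun j => Complex.arg (z j)) hij.le
  constructor
  · linarith
  · linarith [Complex.arg_le_pi (z (σ j)), Complex.neg_pi_lt_arg (z (σ i))]

end Alcove

section Unitary

variable {n : Type*} [Fintype n] [DecidableEq n]

/-- The diagonal unitary matrix with the given unimodular entries; with `Circle.exp`, it
parametrises unitaries by their eigenvalue angles. -/
def unitaryDiagonal (z : n → Circle) : unitaryGroup n ℂ :=
  ⟨diagonal fun j => (z j : ℂ), by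
    simp [mem_unitaryGroup_iff, star_eq_conjTranspose, diagonal_conjTranspose,
      Complex.mul_conj, Pi.star_def]⟩

@[fun_prop]
theorem continuous_unitaryDiagonal : Continuous (unitaryDiagonal : (n → Circle) → _) :=
  Continuous.subtype_mk (Continuous.matrix_diagonal (by fun_prop)) _

theorem unitaryDiagonal_one : unitaryDiagonal (1 : n → Circle) = 1 :=
  Subtype.ext (by simp [unitaryDiagonal])

theorem exists_conj_unitaryDiagonal_eq_comp (z : n → Circle) (σ : Equiv.Perm n) :
    ∃ P, P * unitaryDiagonal z * P⁻¹ = unitaryDiagonal (z ∘ σ) := by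
  refine ⟨⟨σ.permMatrix ℂ, ?_⟩, Subtype.ext ?_⟩
  · simp [mem_unitaryGroup_iff, star_eq_conjTranspose, ← Matrix.permMatrix_mul]
  · simp only [unitaryDiagonal, UnitaryGroup.mul_val, UnitaryGroup.inv_val, star_eq_conjTranspose,
      conjTranspose_permMatrix, PEquiv.toMatrix_toPEquiv_mul, PEquiv.mul_toMatrix_toPEquiv,
      submatrix_submatrix, Function.id_comp, Function.comp_id]
    exact submatrix_diagonal_equiv _ σ

open scoped Matrix.Norms.L2Operator in
theorem exists_isHermitian_exp_I_smul_eq (U : unitaryGroup n ℂ) :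
    ∃ H : Matrix n n ℂ, H.IsHermitian ∧ (U : Matrix n n ℂ) = NormedSpace.exp (Complex.I • H) := by
  have harg : ContinuousOn (fun z => (Complex.arg z : ℂ)) (spectrum ℂ (U : Matrix n n ℂ)) :=
    (Matrix.finite_spectrum _).continuousOn _
  refine ⟨cfc (fun z => (Complex.arg z : ℂ)) (U : Matrix n n ℂ), IsSelfAdjoint.cfc_arg _, ?_⟩
  rw [← CFC.complex_exp_eq_normedSpace_exp, ← cfc_comp_smul .., ← cfc_comp' ..]
  conv_lhs => rw [← cfc_id' ℂ (U : Matrix n n ℂ)]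
  refine cfc_congr fun z hz => ?_
  have hpolar := Complex.norm_mul_exp_arg_mul_I z
  rw [spectrum.norm_eq_one_of_unitary U.2 hz, Complex.ofReal_one, one_mul] at hpolar
  simp only [smul_eq_mul, mul_comm Complex.I, hpolar]

theorem exists_eq_conj_unitaryDiagonal (U : unitaryGroup n ℂ) :
    ∃ V z, U = V * unitaryDiagonal z * V⁻¹ := by
  obtain ⟨H, hH, hU⟩ := exists_isHermitian_exp_I_smul_eq U
  let V := hH.eigenvectorUnitary
  refine ⟨V, fun j => Circle.exp (hH.eigenvalues j), Subtype.ext ?_⟩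
  have hconj : Complex.I • H = Unitary.toUnits V *
      diagonal (fun j => Complex.I * hH.eigenvalues j) * (Unitary.toUnits V)⁻¹.1 := by
    conv_lhs => rw [hH.spectral_theorem, Unitary.conjStarAlgAut_apply]
    rw [← smul_mul_assoc, ← mul_smul_comm, ← diagonal_smul]
    rfl
  have hexp : NormedSpace.exp (fun j => Complex.I * hH.eigenvalues j) =
      fun j => (Circle.exp (hH.eigenvalues j) : ℂ) := by
    funext j
    rw [Pi.coe_exp, ← Complex.exp_eq_exp_ℂ, Circle.coe_exp, mul_comm]
  rw [hU, hconj, Matrix.exp_units_conj, exp_diagonal, hexp]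
  rfl

theorem charpoly_conj_unitaryDiagonal (V : unitaryGroup n ℂ) (z : n → Circle) :
    (V * unitaryDiagonal z * V⁻¹ : unitaryGroup n ℂ).1.charpoly =
      ∏ j, (Polynomial.X - Polynomial.C (z j : ℂ)) := by
  rw [Matrix.UnitaryGroup.mul_val, Matrix.UnitaryGroup.mul_val, charpoly_mul_comm, ← mul_assoc,
    Matrix.UnitaryGroup.inv_val, UnitaryGroup.star_mul_self, one_mul]
  exact charpoly_diagonal _

theorem spectrum_conj_unitaryDiagonal (V : unitaryGroup n ℂ) (z : n → Circle) :
    spectrum ℂ (V * unitaryDiagonal z * V⁻¹ : unitaryGroup n ℂ).1 =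
      Set.range fun j => (z j : ℂ) := by
  have h := spectrum.units_conjugate (R := ℂ) (a := (unitaryDiagonal z).1) (u := Unitary.toUnits V)
  exact h.trans (spectrum_diagonal _)

instance preconnectedSpace_unitaryGroup : PreconnectedSpace (unitaryGroup n ℂ) := by
  refine ⟨isPreconnected_of_forall 1 fun U _ => ?_⟩
  obtain ⟨V, z, rfl⟩ := exists_eq_conj_unitaryDiagonal U
  exact ⟨Set.range fun w => V * unitaryDiagonal w * V⁻¹, Set.subset_univ _,
    ⟨1, by simp [unitaryDiagonal_one]⟩, ⟨z, rfl⟩, isPreconnected_range (by fun_prop)⟩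

end Unitary

section SpectrumShrinking

open Polynomial

theorem exists_eq_conj_circleExp {n : ℕ} (U : unitaryGroup (Fin n) ℂ) :
    ∃ V, ∃ θ ∈ closure (angleAlcove n),
      U = V * unitaryDiagonal (fun j => Circle.exp (θ j)) * V⁻¹ := by
  obtain ⟨V, z, rfl⟩ := exists_eq_conj_unitaryDiagonal U
  obtain ⟨σ, θ, hθ, hz⟩ := exists_perm_mem_closure_angleAlcove z
  obtain ⟨P, hP⟩ := exists_conj_unitaryDiagonal_eq_comp z σ
  refine ⟨V * P⁻¹, θ, hθ, ?_⟩
  rw [← hz, ← hP]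
  group

variable {n : ℕ} {ι : Type*} [Fintype ι] [DecidableEq ι]
  {φ : unitaryGroup (Fin n) ℂ → Matrix ι ι ℂ}

theorem exists_charpoly_eq_prod_of_mem_closure_angleAlcove (hφ : Continuous φ)
    (hs : ∀ U, spectrum ℂ (φ U) ⊆ spectrum ℂ U.1) :
    ∃ a : Fin n → ℕ, ∀ V, ∀ θ ∈ closure (angleAlcove n),
      (φ (V * unitaryDiagonal (fun j => Circle.exp (θ j)) * V⁻¹)).charpoly =
        ∏ j, (X - C (Circle.exp (θ j) : ℂ)) ^ a j := by
  have hconn : PreconnectedSpace (angleAlcove n) :=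
    Subtype.preconnectedSpace convex_angleAlcove.isPreconnected
  let Ψ (p : unitaryGroup (Fin n) ℂ × (Fin n → ℝ)) : Matrix ι ι ℂ :=
    φ (p.1 * unitaryDiagonal (fun j => Circle.exp (p.2 j)) * p.1⁻¹)
  have hΨ : Continuous Ψ := hφ.comp (by fun_prop)
  have hlabels : Continuous fun (q : unitaryGroup (Fin n) ℂ × angleAlcove n) j =>
      (Circle.exp (q.2.1 j) : ℂ) := by
    have hangles : Continuous fun θ : Fin n → ℝ => fun j => (Circle.exp (θ j) : ℂ) := by fun_prop
    exact hangles.comp (by fun_prop)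
  obtain ⟨a, ha⟩ := exists_eq_prod_X_sub_C_pow_of_preconnectedSpace
    (T := unitaryGroup (Fin n) ℂ × angleAlcove n)
    (p := fun q => (Ψ (q.1, q.2)).charpoly) (l := fun q j => (Circle.exp (q.2.1 j) : ℂ))
    (continuous_eval_charpoly (hΨ.comp (by fun_prop))) (fun _ => IsAlgClosed.splits _)
    (fun q => charpoly_monic _) (fun q => (charpoly_natDegree_eq_dim _).le) hlabels
    (fun q => Circle.coe_injective.comp (injective_circleExp_of_mem_angleAlcove q.2.2))
    (fun q x hx => spectrum_conj_unitaryDiagonal q.1 _ ▸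
      hs _ (mem_spectrum_iff_isRoot_charpoly.2 hx))
  refine ⟨a, fun V θ hθ => ?_⟩
  have hclosed := isClosed_setOf_eq_prod_X_sub_C_pow
    (p := fun θ => (Ψ (V, θ)).charpoly) (l := fun θ j => (Circle.exp (θ j) : ℂ))
    (continuous_eval_charpoly (hΨ.comp (by fun_prop))) (by fun_prop) a
  exact closure_minimal (fun θ hθ => ha (V, ⟨θ, hθ⟩)) hclosed hθ

theorem charpoly_exponent_apply_perm {m : Type*} [Fintype m] [DecidableEq m]
    {φ : unitaryGroup m ℂ → Matrix ι ι ℂ} {z : m → Circle} (hz : Function.Injective z)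
    (σ : Equiv.Perm m) {a : m → ℕ}
    (ha : ∀ V, (φ (V * unitaryDiagonal z * V⁻¹)).charpoly = ∏ j, (X - C (z j : ℂ)) ^ a j)
    (haσ : (φ (unitaryDiagonal (z ∘ σ))).charpoly = ∏ j, (X - C (z (σ j) : ℂ)) ^ a j) (j : m) :
    a (σ j) = a j := by
  obtain ⟨P, hP⟩ := exists_conj_unitaryDiagonal_eq_comp z σ
  have hz' : Function.Injective fun j => (z j : ℂ) := Circle.coe_injective.comp hz
  have hprod : ∏ j, (X - C (z j : ℂ)) ^ a j = ∏ j, (X - C (z (σ j) : ℂ)) ^ a j := by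
    rw [← ha P, hP, haσ]
  rw [← rootMultiplicity_prod_X_sub_C_pow hz' a (σ j), hprod]
  exact rootMultiplicity_prod_X_sub_C_pow (hz'.comp σ.injective) a j

open Fin.NatCast in
theorem exists_charpoly_eq_pow_of_continuous [NeZero n] (hφ : Continuous φ)
    (hs : ∀ U, spectrum ℂ (φ U) ⊆ spectrum ℂ U.1) :
    ∃ a : ℕ, ∀ U, (φ U).charpoly = U.1.charpoly ^ a := by
  obtain ⟨a, ha⟩ := exists_charpoly_eq_prod_of_mem_closure_angleAlcove hφ hs
  have hrotate : (fun j => Circle.exp (regularAngles n 1 j)) =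
      (fun j => Circle.exp (regularAngles n 0 j)) ∘ Equiv.addRight 1 :=
    funext circleExp_regularAngles_one
  have hregular (s : ℝ) (V) := ha V _ (subset_closure (regularAngles_mem_angleAlcove s))
  have hperiodic : Function.Periodic a 1 := charpoly_exponent_apply_perm
    (injective_circleExp_of_mem_angleAlcove (regularAngles_mem_angleAlcove 0)) (Equiv.addRight 1)
    (hregular 0) (by
      rw [← hrotate]
      simpa [circleExp_regularAngles_one] using hregular 1 1)
  have hconst (j : Fin n) : a j = a 0 := by
    simpa [nsmul_one] using hperiodic.nsmul_eq j
  refine ⟨a 0, fun U => ?_⟩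
  obtain ⟨V, θ, hθ, rfl⟩ := exists_eq_conj_circleExp U
  rw [ha V θ hθ, charpoly_conj_unitaryDiagonal, ← Finset.prod_pow]
  simp only [hconst]

end SpectrumShrinking

/-- For integers `m, n ≥ 1`, there exists a continuous spectrum-shrinking
map `φ : U(n) → M_m` iff `n ∣ m`; and when `n ∣ m`, every continuous spectrum-shrinking
`φ : U(n) → M_m` satisfies `k_{φ(X)} = (k_X)^(m/n)` (in particular it preserves spectra). -/
theorem exists_continuous_spectrum_shrinker_Un_iff (n m : ℕ) (hn : 1 ≤ n) (hm : 1 ≤ m) :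
    ((∃ φ : {X : Matrix (Fin n) (Fin n) ℂ // X * X.conjTranspose = 1} →
          Matrix (Fin m) (Fin m) ℂ,
        Continuous φ ∧ ∀ X, spectrum ℂ (φ X) ⊆ spectrum ℂ X.val) ↔ n ∣ m) ∧
    (n ∣ m → ∀ φ : {X : Matrix (Fin n) (Fin n) ℂ // X * X.conjTranspose = 1} →
          Matrix (Fin m) (Fin m) ℂ,
        Continuous φ → (∀ X, spectrum ℂ (φ X) ⊆ spectrum ℂ X.val) →
        ∀ X, (φ X).charpoly = X.val.charpoly ^ (m / n) ∧
          spectrum ℂ (φ X) = spectrum ℂ X.val) := by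
  have : NeZero n := ⟨by omega⟩
  have hpow : ∀ φ : {X : Matrix (Fin n) (Fin n) ℂ // X * X.conjTranspose = 1} →
      Matrix (Fin m) (Fin m) ℂ, Continuous φ → (∀ X, spectrum ℂ (φ X) ⊆ spectrum ℂ X.val) →
      ∃ a, m = n * a ∧ ∀ X, (φ X).charpoly = X.val.charpoly ^ a := by
    intro φ hφ hs
    obtain ⟨a, ha⟩ := exists_charpoly_eq_pow_of_continuous
      (φ := fun U => φ ⟨U.1, mem_unitaryGroup_iff.1 U.2⟩) (hφ.comp (by fun_prop)) fun U => hs _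
    refine ⟨a, ?_, fun X => ha ⟨X.1, mem_unitaryGroup_iff.2 X.2⟩⟩
    simpa [mul_comm] using congrArg Polynomial.natDegree (ha 1)
  refine ⟨⟨?_, fun h => ?_⟩, fun _ φ hφ hs X => ?_⟩
  · rintro ⟨φ, hφ, hs⟩
    obtain ⟨a, hm, -⟩ := hpow φ hφ hs
    exact ⟨a, hm⟩
  · obtain ⟨f⟩ := nonempty_matrix_algHom_of_dvd ℂ h
    exact ⟨fun X => f X.1, f.toLinearMap.continuous_of_finiteDimensional.comp
      continuous_subtype_val, fun X => AlgHom.spectrum_apply_subset f X.1⟩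
  · obtain ⟨a, rfl, ha⟩ := hpow φ hφ hs
    rw [Nat.mul_div_cancel_left a (by omega)]
    have ha₀ : a ≠ 0 := by
      rintro rfl
      omega
    exact ⟨ha X, spectrum_eq_of_charpoly_eq_pow (ha X) ha₀⟩
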